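/- arXiv:1704.00555 — 6 statements merged into one kernel-verified Lean document; each statement's English description precedes it below -/
import Mathlib

section
/- Let k be a field, V a k-vector space, W a commutative k-algebra, and M a finite-dimensional k-vector space with dim_k M < N for some positive integer N. Let co : V → W ⊗_k M be a k-linear map and let f_1, …, f_N : M → W be k-linear maps. Define φ_i : V → W by φ_i(v) = μ((id_W ⊗ f_i)(co(v))), where μ : W ⊗_k W → W is the multiplication map. Then for every choice of vectors v_1, …, v_N ∈ V, the determinant of the N×N matrix (φ_i(v_j))_{1≤i,j≤N} (with entries in W) is zero. -/
open TensorProduct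

/-!
Extending `fᵢ` by `W`-linearity gives a `W`-linear form on `W ⊗ M`, and `φᵢ` is that form composed
with `co`. So `det (φᵢ (vⱼ))` is the value at `(co (vⱼ))ⱼ` of an alternating `W`-multilinear map on
`W ⊗ M`. Since `W ⊗ M` has fewer than `N` generators over `W`, expanding in them leaves only terms
with a repeated argument.
-/

section SpanFinrank

variable {R P ι : Type*}

theorem alternatingMap_eq_zero_of_spanFinrank_lt_card [CommSemiring R] [AddCommMonoid P]
    [Module R P] [Module.Finite R P] {Q : Type*} [AddCommMonoid Q] [Module R Q] [Fintype ι]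
    (h : (⊤ : Submodule R P).spanFinrank < Fintype.card ι) (g : P [⋀^ι]→ₗ[R] Q) : g = 0 := by
  obtain ⟨s, hcard, hspan⟩ :=
    (Module.Finite.fg_top (R := R) (M := P)).exists_span_finset_card_eq_spanFinrank
  have hsurj : Function.Surjective (Finsupp.linearCombination R ((↑) : s → P)) := by
    rw [← LinearMap.range_eq_top, Finsupp.range_linearCombination, Subtype.range_coe]
    exact hspan
  have hlt : Fintype.card s < Fintype.card ι := by rwa [Fintype.card_coe, hcard]
  refine AlternatingMap.compLinearMap_injective _ hsurj <|
    Finsupp.basisSingleOne.ext_alternating fun i hi ↦ ?_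
  exact absurd (Fintype.card_le_of_injective i hi) hlt.not_ge

theorem det_linearForm_apply_eq_zero_of_spanFinrank_lt_card [CommRing R] [AddCommMonoid P]
    [Module R P] [Module.Finite R P] [Fintype ι] [DecidableEq ι]
    (h : (⊤ : Submodule R P).spanFinrank < Fintype.card ι) (l : ι → P →ₗ[R] R) (x : ι → P) :
    (Matrix.of fun i j ↦ l i (x j)).det = 0 := by
  let g : P [⋀^ι]→ₗ[R] R := Matrix.detRowAlternating.compLinearMap (LinearMap.pi l)
  calc (Matrix.of fun i j ↦ l i (x j)).det
      = g x := (Matrix.det_transpose _).symm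
    _ = 0 := by rw [alternatingMap_eq_zero_of_spanFinrank_lt_card h g, AlternatingMap.zero_apply]

end SpanFinrank

section BaseChange

variable {k W M : Type*}

theorem mul'_map_id_apply_eq_liftBaseChange [CommSemiring k] [CommSemiring W] [Algebra k W]
    [AddCommMonoid M] [Module k M] (f : M →ₗ[k] W) (t : W ⊗[k] M) :
    LinearMap.mul' k W (TensorProduct.map LinearMap.id f t) = f.liftBaseChange W t := by
  induction t using TensorProduct.induction_on with
  | zero => simp only [map_zero]
  | tmul w m => simp only [map_tmul, LinearMap.id_apply, LinearMap.mul'_apply,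
      LinearMap.liftBaseChange_tmul, smul_eq_mul]
  | add t u ht hu => simp only [map_add, ht, hu]

theorem det_eq_zero_of_factors_through_coaction_general [CommRing k] [CommRing W] [Algebra k W]
    [AddCommGroup M] [Module k M] [Module.Finite k M] {ι : Type*} [Fintype ι] [DecidableEq ι]
    (h : (⊤ : Submodule k M).spanFinrank < Fintype.card ι)
    (f : ι → M →ₗ[k] W) (t : ι → W ⊗[k] M) :
    (Matrix.of fun i j ↦
      LinearMap.mul' k W (TensorProduct.map LinearMap.id (f i) (t j))).det = 0 := by
  have hbaseChange : (⊤ : Submodule W (W ⊗[k] M)).spanFinrank < Fintype.card ι := by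
    rw [← Submodule.baseChange_top]
    exact (Module.Finite.fg_top.spanFinrank_baseChange_le (A := W)).trans_lt h
  simp only [mul'_map_id_apply_eq_liftBaseChange]
  exact det_linearForm_apply_eq_zero_of_spanFinrank_lt_card hbaseChange _ t

end BaseChange

/-- Lemma 5.4 of the paper: if `co : V → W ⊗ M` with `dim M < N`, and each
`φᵢ : V → W` is obtained from `co` by applying `id ⊗ fᵢ` followed by multiplication
in `W`, then the `N × N` determinant `det (φᵢ (vⱼ))` vanishes. -/
theorem det_eq_zero_of_factors_through_coaction {k : Type*} [Field k]
    {V W M : Type*} [AddCommGroup V] [Module k V]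
    [CommRing W] [Algebra k W]
    [AddCommGroup M] [Module k M] [FiniteDimensional k M]
    {N : ℕ} (hN : 0 < N) (hdim : Module.finrank k M < N)
    (co : V →ₗ[k] W ⊗[k] M) (f : Fin N → (M →ₗ[k] W)) (v : Fin N → V) :
    Matrix.det (Matrix.of fun i j : Fin N =>
      (LinearMap.mul' k W)
        ((TensorProduct.map (LinearMap.id : W →ₗ[k] W) (f i)) (co (v j)))) = 0 := by
  rw [Module.finrank_eq_spanFinrank_of_free, ← Fintype.card_fin N] at hdim
  exact det_eq_zero_of_factors_through_coaction_general hdim f fun j ↦ co (v j)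
end

section
/- Let G be a group acting on a group Π by group automorphisms (action written g(p)), and let T ⊆ G be a subgroup such that the only element of Π fixed by every element of T is the identity (i.e., if t(b) = b for all t ∈ T then b = 1). Let c : G → Π be a 1-cocycle such that there exists b ∈ Π with c(t) = b⁻¹·t(b) for all t ∈ T (the restriction of c to T is a coboundary). Then there exists exactly one 1-cocycle c' : G → Π which is cohomologous to c (i.e. c'(g) = a⁻¹·c(g)·g(a) for some a ∈ Π and all g) and satisfies c'(t) = 1 for all t ∈ T. -/
section

variable {G Q : Type*} [Mul G] [Group Q] (φ : G →ₙ* Monoid.End Q)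

/-- Nonabelian 1-cocycles (crossed homomorphisms) for the action of `G` on `Q` given by `φ`,
as a predicate on bare maps `G → Q`. -/
def IsCocycle (c : G → Q) : Prop :=
  ∀ g h : G, c (g * h) = c g * φ g (c h)

/-- The map obtained from `c` by changing it by `a` within its cohomology class. This is a right
action of `Q` on maps `G → Q`; its orbits on cocycles are the classes in `H¹(G, Q)`. -/
def cocycleTwist (a : Q) (c : G → Q) : G → Q :=
  fun g => a⁻¹ * c g * φ g a

/-- The relation whose classes on 1-cocycles form the nonabelian `H¹(G, Q)`. -/
def Cohomologous (c c' : G → Q) : Prop :=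
  ∃ a : Q, ∀ g : G, c' g = cocycleTwist φ a c g

variable {φ}

theorem IsCocycle.twist {c : G → Q} (hc : IsCocycle φ c) (a : Q) :
    IsCocycle φ (cocycleTwist φ a c) := by
  intro g h
  simp only [cocycleTwist, hc g h, map_mul, map_inv, Monoid.End.coe_mul, Function.comp_apply]
  group

theorem cocycleTwist_cocycleTwist (a b : Q) (c : G → Q) :
    cocycleTwist φ b (cocycleTwist φ a c) = cocycleTwist φ (a * b) c := by
  funext g
  simp only [cocycleTwist, map_mul, mul_inv_rev, mul_assoc]

theorem cocycleTwist_one (c : G → Q) : cocycleTwist φ 1 c = c := by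
  funext g
  simp only [cocycleTwist, inv_one, one_mul, map_one, mul_one]

theorem cocycleTwist_inv_apply_eq_one_iff {c : G → Q} {b : Q} {g : G} :
    cocycleTwist φ b⁻¹ c g = 1 ↔ c g = b⁻¹ * φ g b := by
  rw [cocycleTwist, inv_inv, map_inv, mul_inv_eq_one, eq_inv_mul_iff_mul_eq]

theorem cocycleTwist_apply_eq_one_iff {c : G → Q} {g : G} (hg : c g = 1) {a : Q} :
    cocycleTwist φ a c g = 1 ↔ φ g a = a := by
  rw [cocycleTwist, hg, mul_one, inv_mul_eq_one, eq_comm]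

theorem cocycleTwist_eq_self_of_trivial_on {T : Set G}
    (hfix : ∀ b : Q, (∀ t ∈ T, φ t b = b) → b = 1) {c : G → Q} (hc : ∀ t ∈ T, c t = 1) {a : Q}
    (ha : ∀ t ∈ T, cocycleTwist φ a c t = 1) : cocycleTwist φ a c = c := by
  have a_eq_one : a = 1 :=
    hfix a fun t ht => (cocycleTwist_apply_eq_one_iff (hc t ht)).mp (ha t ht)
  rw [a_eq_one, cocycleTwist_one]

theorem unique_cocycle_representative_trivial_on_T_general {T : Set G}
    (hfix : ∀ b : Q, (∀ t ∈ T, φ t b = b) → b = 1) {c : G → Q} (hc : IsCocycle φ c) {b : Q}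
    (hb : ∀ t ∈ T, c t = b⁻¹ * φ t b) :
    ∃! c' : G → Q, IsCocycle φ c' ∧ Cohomologous φ c c' ∧ ∀ t ∈ T, c' t = 1 := by
  have trivial_on_T : ∀ t ∈ T, cocycleTwist φ b⁻¹ c t = 1 :=
    fun t ht => cocycleTwist_inv_apply_eq_one_iff.mpr (hb t ht)
  refine ⟨cocycleTwist φ b⁻¹ c, ⟨hc.twist b⁻¹, ⟨b⁻¹, fun _ => rfl⟩, trivial_on_T⟩, ?_⟩
  rintro c' ⟨-, ⟨a, ha⟩, hc'⟩
  have c'_eq : c' = cocycleTwist φ (b * a) (cocycleTwist φ b⁻¹ c) := by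
    rw [cocycleTwist_cocycleTwist, inv_mul_cancel_left]
    exact funext ha
  subst c'_eq
  exact cocycleTwist_eq_self_of_trivial_on hfix trivial_on_T hc'

end

/-- Lemma 8.1 of the paper (abstract form): if the only element of `Q` fixed by every
element of the subgroup `T ≤ G` is the identity, then every 1-cocycle `c : G → Q`
whose restriction to `T` is a coboundary is cohomologous to exactly one 1-cocycle
which is trivial on `T`. -/
theorem unique_cocycle_representative_trivial_on_T {G Q : Type*} [Group G] [Group Q]
    (φ : G →* MulAut Q) (T : Subgroup G)
    (hfix : ∀ b : Q, (∀ t ∈ T, φ t b = b) → b = 1)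
    (c : G → Q) (hc : ∀ g h : G, c (g * h) = c g * φ g (c h))
    (b : Q) (hb : ∀ t ∈ T, c t = b⁻¹ * φ t b) :
    ∃! c' : G → Q,
      (∀ g h : G, c' (g * h) = c' g * φ g (c' h)) ∧
      (∃ a : Q, ∀ g : G, c' g = a⁻¹ * c g * φ g a) ∧
      (∀ t ∈ T, c' t = 1) := by
  let ψ : G →ₙ* Monoid.End Q := (MulDistribMulAction.toMonoidEnd (MulAut Q) Q).comp φ
  exact unique_cocycle_representative_trivial_on_T_general (φ := ψ) (T := T) hfix hc hb
end

section
/- Let M ≥ 1, let α_1, …, α_M be positive integers, and let α be the least common multiple of α_1, …, α_M. For every natural number n, the number of tuples (x_1, …, x_M) ∈ ℕ^M with α_1 x_1 + ⋯ + α_M x_M = α·n is at least the binomial coefficient C(n + M − 1, M − 1). -/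
/-!
If `α i * c i = N` for all `i`, then `y ↦ (c i * y i)ᵢ` injects the solutions of `∑ i, y i = n`,
which are counted by stars and bars, into those of `∑ i, α i * x i = N * n`.
-/

section Denumerant

variable {ι : Type*} [Fintype ι]

/-- Sylvester's denumerant, `P(α; n)` in the paper: the number of tuples `x` of natural numbers
with `∑ i, α i * x i = n`. As a `Nat.card` it is `0` when there are infinitely many such tuples,
which can only happen if some weight `α i` vanishes. -/
noncomputable def denumerant (α : ι → ℕ) (n : ℕ) : ℕ :=
  Nat.card {x : ι → ℕ // ∑ i, α i * x i = n}

theorem finite_setOf_sum_mul_eq {α : ι → ℕ} (hα : ∀ i, 0 < α i) (n : ℕ) :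
    {x : ι → ℕ | ∑ i, α i * x i = n}.Finite := by
  classical
  refine (Set.finite_Iic fun _ ↦ n).subset fun x hx i ↦ ?_
  calc x i ≤ α i * x i := Nat.le_mul_of_pos_left _ (hα i)
    _ ≤ ∑ j, α j * x j :=
      Finset.single_le_sum (f := fun j ↦ α j * x j) (fun _ _ ↦ Nat.zero_le _) (Finset.mem_univ i)
    _ = n := hx

theorem denumerant_le_of_dvd {α β : ι → ℕ} (hβ : ∀ i, 0 < β i) (hdvd : ∀ i, α i ∣ β i) (n : ℕ) :
    denumerant β n ≤ denumerant α n := by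
  choose c hc using hdvd
  have hα (i : ι) : 0 < α i := Nat.pos_of_mul_pos_right (hc i ▸ hβ i)
  have hc_pos (i : ι) : 0 < c i := Nat.pos_of_mul_pos_left (hc i ▸ hβ i)
  have : Finite {x : ι → ℕ // ∑ i, α i * x i = n} := (finite_setOf_sum_mul_eq hα n).to_subtype
  have hsum (y : ι → ℕ) : ∑ i, α i * (c i * y i) = ∑ i, β i * y i := by
    simp only [hc, mul_assoc]
  have hinj : Function.Injective fun (y : ι → ℕ) i ↦ c i * y i := fun y z h ↦
    funext fun i ↦ Nat.eq_of_mul_eq_mul_left (hc_pos i) (congrFun h i)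
  exact Nat.card_le_card_of_injective _
    (Subtype.map_injective (fun y hy ↦ (hsum y).trans hy) hinj)

theorem denumerant_mul_left {N : ℕ} (hN : N ≠ 0) (α : ι → ℕ) (n : ℕ) :
    denumerant (fun i ↦ N * α i) (N * n) = denumerant α n := by
  simp only [denumerant, mul_assoc, ← Finset.mul_sum, Nat.mul_right_inj hN]

theorem denumerant_one (n : ℕ) :
    denumerant (fun _ : ι ↦ 1) n = (Fintype.card ι).multichoose n := by
  classical
  simp only [denumerant, one_mul]
  rw [← Nat.card_congr (Sym.equivNatSumOfFintype ι n), Sym.natCard_sym_eq_multichoose,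
    Nat.card_eq_fintype_card]

theorem choose_le_count_solutions_general {N : ℕ} (hN : N ≠ 0) {α : ι → ℕ}
    (hdvd : ∀ i, α i ∣ N) (n : ℕ) :
    (Fintype.card ι).multichoose n ≤ denumerant α (N * n) :=
  calc (Fintype.card ι).multichoose n = denumerant (fun _ : ι ↦ 1) n := (denumerant_one n).symm
    _ = denumerant (fun _ : ι ↦ N * 1) (N * n) := (denumerant_mul_left hN _ n).symm
    _ ≤ denumerant α (N * n) :=
      denumerant_le_of_dvd (fun _ ↦ by simpa only [mul_one] using Nat.pos_of_ne_zero hN)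
        (fun i ↦ (hdvd i).mul_right 1) _

end Denumerant

theorem multichoose_eq_choose_sub_one {k : ℕ} (hk : 1 ≤ k) (n : ℕ) :
    k.multichoose n = (n + k - 1).choose (k - 1) := by
  rw [Nat.multichoose_eq, add_comm k n]
  exact Nat.choose_symm_of_eq_add (by omega)

/-- Lower bound in Lemma 8.3 of the paper: for positive integers `α₁, …, α_M` with
least common multiple `α`, the number of tuples `x ∈ ℕ^M` with `Σ αᵢ xᵢ = α·n` is at
least `C(n + M - 1, M - 1)`. -/
theorem choose_le_count_solutions {M : ℕ} (hM : 1 ≤ M) (α : Fin M → ℕ)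
    (hα : ∀ i, 0 < α i) (n : ℕ) :
    (n + M - 1).choose (M - 1) ≤
      Nat.card {x : Fin M → ℕ // ∑ i, α i * x i = (Finset.univ.lcm α) * n} := by
  have hlcm : Finset.univ.lcm α ≠ 0 := Finset.lcm_ne_zero_iff.mpr fun i _ ↦ (hα i).ne'
  simpa only [multichoose_eq_choose_sub_one hM, Fintype.card_fin, denumerant] using
    choose_le_count_solutions_general hlcm (fun i ↦ Finset.dvd_lcm (Finset.mem_univ i)) n
end

section
/- Let M > M' ≥ 0 be natural numbers, let α_1, …, α_M and β_1, …, β_{M'} be positive integers. Then there exists a natural number n such that the number of tuples x ∈ ℕ^M with Σ_i α_i x_i = n is strictly greater than the number of tuples y ∈ ℕ^{M'} with Σ_j β_j y_j = n. -/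
/-!
The two counts are compared through their partial sums. The simplex `Σ αᵢ xᵢ ≤ N` contains the
box `[0, K]^M` as soon as `N ≥ (Σ αᵢ) K`, while the simplex `Σ βⱼ yⱼ ≤ N` is contained in the box
`[0, N]^M'`. For `N = (Σ αᵢ) K` the first simplex thus has at least `(K + 1) ^ M` points and the
second at most `(N + 1) ^ M'`; since `M' < M`, the former number is larger for a suitable `K`, so
some `n ≤ N` must contribute more points to the first simplex than to the second.
-/

section Fibers

variable {X Y ι : Type*} {f : X → ι} {g : Y → ι} {s : Finset ι}

theorem ncard_preimage_eq_sum_ncard_fiber (hf : (f ⁻¹' s).Finite) :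
    (f ⁻¹' s).ncard = ∑ n ∈ s, (f ⁻¹' {n}).ncard := by
  classical
  have hmaps : ∀ x ∈ hf.toFinset, f x ∈ s := by simp
  rw [Set.ncard_eq_toFinset_card _ hf, Finset.card_eq_sum_card_fiberwise hmaps]
  refine Finset.sum_congr rfl fun n hn => ?_
  have hfiber : ↑(hf.toFinset.filter (f · = n)) = f ⁻¹' {n} := by
    ext x
    simpa using fun hx : f x = n => hx ▸ hn
  rw [← Set.ncard_coe_finset, hfiber]

theorem exists_ncard_fiber_lt_of_ncard_preimage_lt (hf : (f ⁻¹' s).Finite)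
    (hg : (g ⁻¹' s).Finite) (hlt : (g ⁻¹' s).ncard < (f ⁻¹' s).ncard) :
    ∃ n ∈ s, (g ⁻¹' {n}).ncard < (f ⁻¹' {n}).ncard := by
  rw [ncard_preimage_eq_sum_ncard_fiber hf, ncard_preimage_eq_sum_ncard_fiber hg] at hlt
  exact Finset.exists_lt_of_sum_lt hlt

end Fibers

section WeightedSimplex

variable {ι : Type*} [Fintype ι] {α : ι → ℕ}

theorem ncard_Iic_const (K : ℕ) : (Set.Iic fun _ : ι => K).ncard = (K + 1) ^ Fintype.card ι := by
  classical
  rw [← Finset.coe_Iic, Set.ncard_coe_finset, Pi.card_Iic]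
  simp

/-- The lattice points of the simplex cut out of the orthant by `Σ αᵢ xᵢ ≤ N`. It is written as a
preimage so that it splits into the fibers of `x ↦ Σ αᵢ xᵢ`, the solution sets being counted. -/
def weightedSimplex (α : ι → ℕ) (N : ℕ) : Set (ι → ℕ) :=
  (fun x => ∑ i, α i * x i) ⁻¹' (Finset.Iic N : Finset ℕ)

theorem mem_weightedSimplex {N : ℕ} {x : ι → ℕ} :
    x ∈ weightedSimplex α N ↔ ∑ i, α i * x i ≤ N := by
  simp [weightedSimplex]

theorem Iic_const_subset_weightedSimplex (α : ι → ℕ) (K : ℕ) :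
    (Set.Iic fun _ => K) ⊆ weightedSimplex α ((∑ i, α i) * K) := by
  intro x hx
  rw [mem_weightedSimplex, Finset.sum_mul]
  exact Finset.sum_le_sum fun i _ => Nat.mul_le_mul_left _ (hx i)

theorem weightedSimplex_subset_Iic_const (hα : ∀ i, 0 < α i) (N : ℕ) :
    weightedSimplex α N ⊆ Set.Iic fun _ => N := by
  intro x hx i
  calc
    x i ≤ α i * x i := Nat.le_mul_of_pos_left _ (hα i)
    _ ≤ ∑ i, α i * x i :=
      Finset.single_le_sum (f := fun i => α i * x i) (fun _ _ => Nat.zero_le _) (Finset.mem_univ i)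
    _ ≤ N := mem_weightedSimplex.1 hx

theorem finite_weightedSimplex (hα : ∀ i, 0 < α i) (N : ℕ) : (weightedSimplex α N).Finite := by
  classical
  exact (Set.finite_Iic _).subset (weightedSimplex_subset_Iic_const hα N)

theorem ncard_weightedSimplex_le (hα : ∀ i, 0 < α i) (N : ℕ) :
    (weightedSimplex α N).ncard ≤ (N + 1) ^ Fintype.card ι := by
  classical
  rw [← ncard_Iic_const]
  exact Set.ncard_le_ncard (weightedSimplex_subset_Iic_const hα N) (Set.finite_Iic _)

theorem pow_le_ncard_weightedSimplex (hα : ∀ i, 0 < α i) (K : ℕ) :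
    (K + 1) ^ Fintype.card ι ≤ (weightedSimplex α ((∑ i, α i) * K)).ncard := by
  rw [← ncard_Iic_const]
  exact Set.ncard_le_ncard (Iic_const_subset_weightedSimplex α K) (finite_weightedSimplex hα _)

end WeightedSimplex

theorem exists_mul_add_one_pow_lt_pow {m n : ℕ} (h : m < n) (A : ℕ) :
    ∃ K : ℕ, (A * K + 1) ^ m < (K + 1) ^ n := by
  -- `K` is the constant factor in `(A * K + 1) ^ m ≤ (A + 1) ^ m * (K + 1) ^ m`.
  let K := (A + 1) ^ m
  have hbase : A * K + 1 ≤ (A + 1) * (K + 1) := by nlinarith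
  refine ⟨K, ?_⟩
  calc
    (A * K + 1) ^ m ≤ ((A + 1) * (K + 1)) ^ m := Nat.pow_le_pow_left hbase m
    _ = K * (K + 1) ^ m := mul_pow _ _ _
    _ < (K + 1) * (K + 1) ^ m := Nat.mul_lt_mul_of_pos_right K.lt_succ_self (by positivity)
    _ = (K + 1) ^ (m + 1) := (pow_succ' _ _).symm
    _ ≤ (K + 1) ^ n := Nat.pow_le_pow_right K.succ_pos h

theorem exists_count_gt_general {ι κ : Type*} [Fintype ι] [Fintype κ]
    (h : Fintype.card κ < Fintype.card ι) {α : ι → ℕ} (hα : ∀ i, 0 < α i)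
    {β : κ → ℕ} (hβ : ∀ j, 0 < β j) :
    ∃ n : ℕ, Nat.card {y : κ → ℕ // ∑ j, β j * y j = n} <
      Nat.card {x : ι → ℕ // ∑ i, α i * x i = n} := by
  obtain ⟨K, hK⟩ := exists_mul_add_one_pow_lt_pow h (∑ i, α i)
  let N := (∑ i, α i) * K
  have hlt : (weightedSimplex β N).ncard < (weightedSimplex α N).ncard :=
    calc
      (weightedSimplex β N).ncard ≤ (N + 1) ^ Fintype.card κ := ncard_weightedSimplex_le hβ N
      _ < (K + 1) ^ Fintype.card ι := hK
      _ ≤ (weightedSimplex α N).ncard := pow_le_ncard_weightedSimplex hα K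
  obtain ⟨n, -, hn⟩ := exists_ncard_fiber_lt_of_ncard_preimage_lt
    (finite_weightedSimplex hα N) (finite_weightedSimplex hβ N) hlt
  exact ⟨n, hn⟩

/-- The coefficient-comparison principle of Section 8 of the paper: a product of
`M` geometric-series factors eventually has strictly larger coefficients than a
product of `M' < M` such factors.  In counting terms: for some `n`, the number of
`x ∈ ℕ^M` with `Σ αᵢ xᵢ = n` strictly exceeds the number of `y ∈ ℕ^{M'}` with
`Σ βⱼ yⱼ = n`. -/
theorem exists_count_gt {M M' : ℕ} (h : M' < M)
    (α : Fin M → ℕ) (hα : ∀ i, 0 < α i)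
    (β : Fin M' → ℕ) (hβ : ∀ j, 0 < β j) :
    ∃ n : ℕ, Nat.card {y : Fin M' → ℕ // ∑ j, β j * y j = n} <
      Nat.card {x : Fin M → ℕ // ∑ i, α i * x i = n} :=
  exists_count_gt_general (by simpa using h) hα hβ
end

section
/- Let k ≥ 1 and s ≥ 1 be integers. For n ∈ ℕ let d_n be the number of solutions in natural numbers of x_1 + x_2 + Σ_{m=2}^{2k} m·y_m = n (the coefficient of t^n in (1−t)^{−2}·∏_{m=2}^{2k}(1−t^m)^{−1}), and let c_n be the number of solutions in natural numbers of z_1 + ⋯ + z_{2s} + Σ_{j=1}^{k−1} (2j+1)·w_j = n (the coefficient of t^n in (1−t)^{−2s}·∏_{j=1}^{k−1}(1−t^{2j+1})^{−1}). Then there exists n with d_n > c_n if and only if k > 2(s − 1). -/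
/-- The number of solutions in natural numbers of `Σᵢ αᵢ xᵢ = n`, where the parts `αᵢ`
(with multiplicity) are given by the list `α`.  This is the coefficient of `tⁿ` in
`∏ᵢ (1 - t^{αᵢ})⁻¹`. -/
noncomputable def coeffCount (α : List ℕ) (n : ℕ) : ℕ :=
  Nat.card {x : Fin α.length → ℕ // ∑ i, α.get i * x i = n}

/-!
A solution count is a coefficient of a product of geometric series `∑ᵢ t^{a i}`, one for each part
`a`, and multiplication respects the coefficientwise order on series over `ℕ`. Both families of
parts contain `3, 5, …, 2k - 1`. If `k ≤ 2 (s - 1)`, trading each of the other `k + 2` parts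
`1, 1, 2, 4, …, 2k` for a part `1` only increases the coefficients, and so does adding further parts
`1` until there are `2s` of them. If `k > 2 (s - 1)`, then `dₙ` counts with more parts than `cₙ`,
and the family with more parts wins along `n = N m`, where `N` is the product of its parts: a family
of `p` parts with product `N` dominates `(1 - t^N)^{-p}`, a family of `q` parts is dominated by
`(1 - t)^{-q}`, and at `t^{N m}` these series have coefficients of order `m^{p-1}` and `m^{q-1}`.
-/

open PowerSeries

section CoefficientwiseOrder

variable {R : Type*} [PartialOrder R]

/-- The coefficientwise order on power series. -/
noncomputable instance powerSeriesPartialOrder [Semiring R] : PartialOrder R⟦X⟧ :=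
  PartialOrder.lift (fun f n => coeff n f) fun _ _ h => PowerSeries.ext (congrFun h)

theorem powerSeries_le_iff [Semiring R] {f g : R⟦X⟧} : f ≤ g ↔ ∀ n, coeff n f ≤ coeff n g :=
  Iff.rfl

instance powerSeriesIsOrderedMonoid [CommSemiring R] [CanonicallyOrderedAdd R] :
    IsOrderedMonoid R⟦X⟧ where
  mul_le_mul_left f g hfg h n := by
    simp only [coeff_mul]
    exact Finset.sum_le_sum fun p _ => mul_le_mul_left (hfg p.1) _

end CoefficientwiseOrder

/-- The geometric series `∑ᵢ t^{a i} = (1 - t^a)⁻¹`, the factor of a part `a` in the generating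
function of `coeffCount`. For `a = 0`, where the sum is meaningless, the encoding gives `1`. -/
noncomputable def geomSeries (a : ℕ) : ℕ⟦X⟧ :=
  PowerSeries.mk fun n => if a ∣ n then 1 else 0

theorem coeff_geomSeries (a n : ℕ) : coeff n (geomSeries a) = if a ∣ n then 1 else 0 :=
  coeff_mk _ _

theorem geomSeries_zero : geomSeries 0 = 1 := by
  ext n
  simp only [coeff_geomSeries, coeff_one, zero_dvd_iff]

theorem geomSeries_le_geomSeries_of_dvd {a b : ℕ} (h : a ∣ b) : geomSeries b ≤ geomSeries a := by
  intro n
  simp only [coeff_geomSeries]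
  split_ifs with hb ha
  · exact le_rfl
  · exact absurd (h.trans hb) ha
  · exact Nat.zero_le _
  · exact le_rfl

theorem one_le_geomSeries (a : ℕ) : 1 ≤ geomSeries a :=
  geomSeries_zero ▸ geomSeries_le_geomSeries_of_dvd (dvd_zero a)

theorem map_castRingHom_geomSeries {a : ℕ} (ha : a ≠ 0) :
    PowerSeries.map (Nat.castRingHom ℤ) (geomSeries a) = expand a ha (PowerSeries.mk 1) := by
  ext n
  simp [coeff_geomSeries, coeff_expand]

theorem coeff_geomSeries_pow {a : ℕ} (ha : a ≠ 0) (q m : ℕ) :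
    coeff (a * m) (geomSeries a ^ (q + 1)) = (m + q).choose q := by
  have h : PowerSeries.map (Nat.castRingHom ℤ) (geomSeries a ^ (q + 1)) =
      expand a ha (PowerSeries.mk fun n => ((q + n).choose q : ℤ)) := by
    rw [map_pow, map_castRingHom_geomSeries ha, ← map_pow, mk_one_pow_eq_mk_choose_add]
  have hm := congrArg (coeff (a * m)) h
  rw [coeff_map, coeff_expand_mul, coeff_mk, add_comm q m] at hm
  exact Nat.cast_injective hm

theorem prod_map_geomSeries_le_pow {l : List ℕ} {r : ℕ} (h : l.length ≤ r) :
    (l.map geomSeries).prod ≤ geomSeries 1 ^ r := by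
  calc (l.map geomSeries).prod
      ≤ geomSeries 1 ^ (l.map geomSeries).length := by
        refine List.prod_le_pow_card _ _ fun f hf => ?_
        obtain ⟨a, -, rfl⟩ := List.mem_map.1 hf
        exact geomSeries_le_geomSeries_of_dvd (one_dvd a)
    _ ≤ geomSeries 1 ^ r := by
        rw [List.length_map]
        exact pow_le_pow_right' (one_le_geomSeries 1) h

theorem geomSeries_prod_pow_length_le (l : List ℕ) :
    geomSeries l.prod ^ l.length ≤ (l.map geomSeries).prod := by
  rw [← List.length_map (f := geomSeries)]
  refine List.pow_card_le_prod _ _ fun f hf => ?_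
  obtain ⟨a, ha, rfl⟩ := List.mem_map.1 hf
  exact geomSeries_le_geomSeries_of_dvd (List.dvd_prod ha)

open Nat in
theorem exists_choose_lt_choose_succ (N q : ℕ) :
    ∃ m, (N * m + q).choose q < (m + (q + 1)).choose (q + 1) := by
  obtain ⟨m, hm⟩ : ∃ m, m = (q + 1)! * (N + 1) ^ q := ⟨_, rfl⟩
  refine ⟨m, lt_of_mul_lt_mul_left ?_ (Nat.zero_le (q + 1)!)⟩
  calc (q + 1)! * (N * m + q).choose q
      ≤ (q + 1)! * (N * m + 1) ^ q := by gcongr; exact choose_add_le_add_one_pow _ _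
    _ ≤ (q + 1)! * ((N + 1) * (m + 1)) ^ q := by gcongr; nlinarith
    _ = m * (m + 1) ^ q := by rw [mul_pow, ← mul_assoc, ← hm]
    _ < (m + 1) * (m + 1) ^ q := by gcongr; exact lt_add_one m
    _ = (m + 1) ^ (q + 1) := (pow_succ' _ _).symm
    _ ≤ (m + 1).ascFactorial (q + 1) := pow_succ_le_ascFactorial _ _
    _ = (q + 1)! * (m + (q + 1)).choose (q + 1) := ascFactorial_eq_factorial_mul_choose _ _

theorem not_geomSeries_pow_le {N p q : ℕ} (hN : N ≠ 0) (hqp : q < p) :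
    ¬ geomSeries N ^ p ≤ geomSeries 1 ^ q := by
  intro hle
  -- The extra factor makes both exponents positive, where the coefficients are binomial.
  have hle' : geomSeries N ^ (q + 1 + 1) ≤ geomSeries 1 ^ (q + 1) := by
    rw [pow_succ _ (q + 1), pow_succ _ q]
    exact mul_le_mul' ((pow_le_pow_right' (one_le_geomSeries N) hqp).trans hle)
      (geomSeries_le_geomSeries_of_dvd (one_dvd N))
  obtain ⟨m, hm⟩ := exists_choose_lt_choose_succ N q
  have hcoeff := powerSeries_le_iff.1 hle' (N * m)
  rw [coeff_geomSeries_pow hN, ← one_mul (N * m), coeff_geomSeries_pow one_ne_zero] at hcoeff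
  exact hcoeff.not_gt hm

theorem card_solutions_eq_coeff_prod {ι : Type*} [Fintype ι] {a : ι → ℕ} (ha : ∀ i, a i ≠ 0)
    (n : ℕ) :
    Nat.card {x : ι → ℕ // ∑ i, a i * x i = n} = coeff n (∏ i, geomSeries (a i)) := by
  classical
  let multiples : Finset (ι →₀ ℕ) := {y ∈ Finset.finsuppAntidiag Finset.univ n | ∀ i, a i ∣ y i}
  have hmem (y : ι →₀ ℕ) : y ∈ multiples ↔ ∑ i, y i = n ∧ ∀ i, a i ∣ y i := by
    simp [multiples]
  let e : {x : ι → ℕ // ∑ i, a i * x i = n} ≃ multiples :=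
    { toFun x := ⟨Finsupp.equivFunOnFinite.symm fun i => a i * x.1 i,
        (hmem _).2 ⟨x.2, fun i => dvd_mul_right _ _⟩⟩
      invFun y := ⟨fun i => y.1 i / a i, by
        obtain ⟨hsum, hdvd⟩ := (hmem _).1 y.2
        simpa only [Nat.mul_div_cancel' (hdvd _)] using hsum⟩
      left_inv x := Subtype.ext <| funext fun i =>
        Nat.mul_div_cancel_left _ (Nat.pos_of_ne_zero (ha i))
      right_inv y := Subtype.ext <| Finsupp.ext fun i =>
        Nat.mul_div_cancel' (((hmem _).1 y.2).2 i) }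
  rw [Nat.card_congr e, Nat.card_eq_fintype_card, Fintype.card_coe, coeff_prod]
  simp only [coeff_geomSeries, Finset.prod_boole, Finset.sum_boole, Finset.mem_univ,
    true_implies, Nat.cast_id, multiples]

theorem coeffCount_eq_coeff_prod {l : List ℕ} (hl : 0 ∉ l) (n : ℕ) :
    coeffCount l n = coeff n (l.map geomSeries).prod := by
  rw [coeffCount, card_solutions_eq_coeff_prod fun (i : Fin l.length) h => hl (h ▸ l.get_mem i)]
  simp only [List.get_eq_getElem, Fin.prod_univ_fun_getElem]

theorem exists_coeffCount_lt_of_length_lt {l l' : List ℕ} (hl : 0 ∉ l) (hl' : 0 ∉ l')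
    (h : l.length < l'.length) : ∃ n, coeffCount l n < coeffCount l' n := by
  by_contra! hle
  have hprod : (l'.map geomSeries).prod ≤ (l.map geomSeries).prod := fun n => by
    simpa only [coeffCount_eq_coeff_prod hl, coeffCount_eq_coeff_prod hl'] using hle n
  exact not_geomSeries_pow_le (List.prod_ne_zero hl') h <|
    (geomSeries_prod_pow_length_le l').trans <| hprod.trans <| prod_map_geomSeries_le_pow le_rfl

theorem coeffCount_le_coeffCount_replicate_one_append {l u v : List ℕ} (hl : 0 ∉ l)
    (h : l.Perm (u ++ v)) {r : ℕ} (hr : u.length ≤ r) (n : ℕ) :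
    coeffCount l n ≤ coeffCount (List.replicate r 1 ++ v) n := by
  have hv : 0 ∉ List.replicate r 1 ++ v := fun h0 => hl <| h.mem_iff.2 <|
    List.mem_append_right u <| (List.mem_append.1 h0).resolve_left (by simp)
  rw [coeffCount_eq_coeff_prod hl, coeffCount_eq_coeff_prod hv, (h.map geomSeries).prod_eq,
    List.map_append, List.prod_append, List.map_append, List.prod_append, List.map_replicate,
    List.prod_replicate]
  exact powerSeries_le_iff.1 (mul_le_mul_left (prod_map_geomSeries_le_pow hr) _) n

theorem range'_two_perm_evens_append_odds (k : ℕ) :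
    (List.range' 2 (2 * k - 1)).Perm
      ((List.range k).map (fun j => 2 * j + 2) ++ (List.range (k - 1)).map fun j => 2 * j + 3) := by
  refine (List.perm_ext_iff_of_nodup List.nodup_range' ?_).2 fun a => ?_
  · refine List.Nodup.append ?_ ?_ ?_
    · exact List.nodup_range.map fun i j hij => by simpa using hij
    · exact List.nodup_range.map fun i j hij => by simpa using hij
    · simp only [List.Disjoint, List.mem_map]
      rintro _ ⟨i, -, rfl⟩ ⟨j, -, hij⟩
      omega
  · simp only [List.mem_range'_1, List.mem_append, List.mem_map, List.mem_range]
    constructor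
    · intro ha
      rcases Nat.even_or_odd' a with ⟨c, rfl | rfl⟩
      · exact Or.inl ⟨c - 1, by omega, by omega⟩
      · exact Or.inr ⟨c - 1, by omega, by omega⟩
    · rintro (⟨j, hj, rfl⟩ | ⟨j, hj, rfl⟩) <;> omega

/-- Section 9.2 of the paper: with `dₙ` the coefficient of `tⁿ` in
`(1-t)⁻² ∏_{m=2}^{2k} (1-tᵐ)⁻¹` and `cₙ` the coefficient of `tⁿ` in
`(1-t)^{-2s} ∏_{j=1}^{k-1} (1-t^{2j+1})⁻¹` (both expressed as counts of solutions of
the associated partition problems), there exists `n` with `dₙ > cₙ` if and only if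
`k > 2(s - 1)`. -/
theorem depth_one_criterion (k s : ℕ) (hk : 1 ≤ k) (hs : 1 ≤ s) :
    (∃ n : ℕ,
      coeffCount
        (List.replicate (2 * s) 1 ++ (List.range (k - 1)).map (fun j => 2 * j + 3)) n <
      coeffCount ([1, 1] ++ List.range' 2 (2 * k - 1)) n) ↔
    2 * (s - 1) < k := by
  have hd : 0 ∉ [1, 1] ++ List.range' 2 (2 * k - 1) := by simp
  have hc : 0 ∉ List.replicate (2 * s) 1 ++ (List.range (k - 1)).map (fun j => 2 * j + 3) := by
    simp
  constructor
  · rintro ⟨n, hn⟩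
    by_contra! hks
    refine hn.not_ge (coeffCount_le_coeffCount_replicate_one_append
      (u := [1, 1] ++ (List.range k).map fun j => 2 * j + 2) hd ?_ ?_ n)
    · rw [List.append_assoc]
      exact (range'_two_perm_evens_append_odds k).append_left _
    · simp only [List.length_append, List.length_cons, List.length_nil, List.length_map,
        List.length_range]
      omega
  · intro hks
    refine exists_coeffCount_lt_of_length_lt hc hd ?_
    simp only [List.length_append, List.length_replicate, List.length_cons, List.length_nil,
      List.length_map, List.length_range, List.length_range']
    omega
end

section
/- Let S be a finite set of prime numbers. Call a nonzero rational number u an S-unit if for every prime p not in S the p-adic valuation of u is zero. Then the set of pairs (u, v) of S-units of ℚ satisfying u + v = 1 is finite. -/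
/-! Integrating `(t (a + b - t) (a - t)) ^ N` over `[0, a]`, `[a, a + b]` and `[0, a + b]` gives,
up to a common factor, an identity
`a ^ (2N+1) P(b, a) + (-1) ^ N b ^ (2N+1) P(a, b) = (a + b) ^ (2N+1) P(a, -(a + b))`
with a form `P` of degree `N` with positive integral coefficients of size `exp (O(N))`. For odd `N`
and `a`, `b` coprime, `c = a + b`, the divisibility
`c ^ (2N+1) ∣ t₁ a ^ (2N+1) + t₂ b ^ (2N+1)` therefore forces `c ^ (2N+1)` to divide the positive
integer `t₁ P(a, b) + t₂ P(b, a)`, whence `c ^ (N+1) ≤ exp (O(N)) (t₁ + t₂)`.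

Clearing denominators, a solution in `S`-units becomes a coprime triple `a + b = c` of integers
composed of primes of `S`. If there were infinitely many, compactness would give infinitely many
whose vectors of prime exponents are nearly proportional. A large one of them, taken to a suitable
power `2N+1`, then agrees with a much larger one `A + B = C` up to cofactors `t₁`, `t₂` too small
for the inequality.
-/

open Finset
open scoped Nat

section UnitEquation

lemma integral_pow_mul_one_sub_pow (m n : ℕ) :
    ∫ s in (0 : ℝ)..1, s ^ m * (1 - s) ^ n = (m ! * n ! : ℝ) / (m + n + 1)! := by
  have hre (k : ℕ) : 0 < (k + 1 : ℂ).re := by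
    rw [Complex.add_re, Complex.natCast_re, Complex.one_re]
    positivity
  have hbeta := Complex.betaIntegral_eq_Gamma_mul_div (m + 1) (n + 1) (hre m) (hre n)
  have hsum : (m + 1 + (n + 1) : ℂ) = ((m + n + 1 : ℕ) : ℂ) + 1 := by push_cast; ring
  rw [hsum, Complex.Gamma_nat_eq_factorial, Complex.Gamma_nat_eq_factorial,
    Complex.Gamma_nat_eq_factorial, Complex.betaIntegral] at hbeta
  simp only [add_sub_cancel_right, Complex.cpow_natCast] at hbeta
  rw [← Complex.ofReal_inj, ← intervalIntegral.integral_ofReal]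
  push_cast
  exact hbeta

/-- The numerator of a Padé approximant in homogeneous form: `(3 * N + 1)! / N ! ^ 3` times the
integral `padeIntegral N x y`, a normalisation that makes the coefficients integral. -/
def padeForm {R : Type*} [CommSemiring R] (N : ℕ) (x y : R) : R :=
  ∑ ij ∈ antidiagonal N,
    ((N + ij.2).choose ij.2 * (3 * N + 1).choose ij.1 : ℕ) * (x ^ ij.1 * y ^ ij.2)

lemma map_padeForm {R R' : Type*} [CommSemiring R] [CommSemiring R'] (f : R →+* R') (N : ℕ)
    (x y : R) : f (padeForm N x y) = padeForm N (f x) (f y) := by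
  simp [padeForm]

lemma padeForm_coeff_eq {i j N : ℕ} (hij : i + j = N) :
    ((3 * N + 1)! : ℝ) * (N.choose i * ((N + j)! * N ! / (N + j + N + 1)!)) =
      (N ! : ℝ) ^ 3 * ((N + j).choose j * (3 * N + 1).choose i : ℕ) := by
  have hN : (N.choose i : ℝ) = N ! / (i ! * j !) := by
    rw [← hij, Nat.cast_add_choose]
  have hNj : ((N + j).choose j : ℝ) = (N + j)! / (N ! * j !) := by
    rw [← Nat.choose_symm_add, Nat.cast_add_choose]
  have hi : ((3 * N + 1).choose i : ℝ) = (3 * N + 1)! / (i ! * (N + j + N + 1)!) := by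
    rw [show 3 * N + 1 = i + (N + j + N + 1) by lia, Nat.cast_add_choose]
  push_cast
  rw [hN, hNj, hi]
  field_simp

/-- The integral representation of the Padé form `padeForm N x y`, from which its three-term
relation is read off. -/
noncomputable def padeIntegral (N : ℕ) (x y : ℝ) : ℝ :=
  ∫ s in (0 : ℝ)..1, (s * (1 - s) * (x + y * s)) ^ N

lemma factorial_mul_padeIntegral (N : ℕ) (x y : ℝ) :
    (3 * N + 1)! * padeIntegral N x y = N ! ^ 3 * padeForm N x y := by
  have hexpand (s : ℝ) : (s * (1 - s) * (x + y * s)) ^ N = ∑ ij ∈ antidiagonal N,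
      N.choose ij.1 * (x ^ ij.1 * y ^ ij.2) * (s ^ (N + ij.2) * (1 - s) ^ N) := by
    rw [mul_pow, mul_pow, (Commute.all x (y * s)).add_pow', mul_sum]
    refine sum_congr rfl fun ij _ ↦ ?_
    rw [nsmul_eq_mul]
    ring
  simp_rw [padeIntegral, hexpand]
  rw [intervalIntegral.integral_finsetSum fun _ _ ↦
    Continuous.intervalIntegrable (by fun_prop) _ _, padeForm, mul_sum, mul_sum]
  refine sum_congr rfl fun ij hij ↦ ?_
  rw [intervalIntegral.integral_const_mul, integral_pow_mul_one_sub_pow]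
  linear_combination x ^ ij.1 * y ^ ij.2 * padeForm_coeff_eq (mem_antidiagonal.mp hij)

lemma integral_eq_pow_mul_padeIntegral (N : ℕ) (p q r : ℝ) :
    ∫ t in p..q, ((t - p) * (q - t) * (r - t)) ^ N =
      (q - p) ^ (2 * N + 1) * padeIntegral N (r - p) (p - q) := by
  have hsubst := intervalIntegral.smul_integral_comp_add_mul (a := 0) (b := 1)
    (fun t ↦ ((t - p) * (q - t) * (r - t)) ^ N) (q - p) p
  rw [mul_one, mul_zero, add_zero, add_sub_cancel] at hsubst
  rw [← hsubst, smul_eq_mul, pow_succ', mul_assoc, padeIntegral,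
    ← intervalIntegral.integral_const_mul ((q - p) ^ (2 * N))]
  congr 2 with s
  rw [pow_mul, ← mul_pow]
  ring

lemma padeIntegral_neg_neg (N : ℕ) (x y : ℝ) :
    padeIntegral N (-x) (-y) = (-1) ^ N * padeIntegral N x y := by
  rw [padeIntegral, padeIntegral, ← intervalIntegral.integral_const_mul]
  congr 1 with s
  rw [← mul_pow]
  ring

lemma padeIntegral_three_term (N : ℕ) (a b : ℝ) :
    a ^ (2 * N + 1) * padeIntegral N b a + (-1) ^ N * b ^ (2 * N + 1) * padeIntegral N a b =
      (a + b) ^ (2 * N + 1) * padeIntegral N a (-(a + b)) := by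
  set f : ℝ → ℝ := fun t ↦ (t * (a + b - t) * (a - t)) ^ N with hf
  have hint (u v : ℝ) : IntervalIntegrable f MeasureTheory.volume u v :=
    Continuous.intervalIntegrable (by fun_prop) u v
  have hleft : ∫ t in (0)..a, f t = a ^ (2 * N + 1) * padeIntegral N b a := by
    have hseg := integral_eq_pow_mul_padeIntegral N a 0 (a + b)
    have hodd : Odd (2 * N + 1) := ⟨N, rfl⟩
    rw [zero_sub, hodd.neg_pow, add_sub_cancel_left, sub_zero] at hseg
    rw [intervalIntegral.integral_symm, neg_eq_iff_eq_neg, ← neg_mul, ← hseg]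
    congr 1 with t
    rw [hf]
    ring
  have hright : ∫ t in a..a + b, f t = (-1) ^ N * b ^ (2 * N + 1) * padeIntegral N a b := by
    have hseg := integral_eq_pow_mul_padeIntegral N a (a + b) 0
    rw [add_sub_cancel_left, zero_sub, sub_add_cancel_left, padeIntegral_neg_neg] at hseg
    rw [mul_assoc, mul_left_comm, ← hseg]
    congr 1 with t
    rw [hf]
    ring
  have hwhole : ∫ t in (0)..a + b, f t =
      (a + b) ^ (2 * N + 1) * padeIntegral N a (-(a + b)) := by
    simpa only [sub_zero, zero_sub] using integral_eq_pow_mul_padeIntegral N 0 (a + b) a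
  rw [← hleft, ← hright, ← hwhole,
    intervalIntegral.integral_add_adjacent_intervals (hint _ _) (hint _ _)]

lemma padeForm_three_term_real (N : ℕ) (a b : ℝ) :
    a ^ (2 * N + 1) * padeForm N b a + (-1) ^ N * b ^ (2 * N + 1) * padeForm N a b =
      (a + b) ^ (2 * N + 1) * padeForm N a (-(a + b)) := by
  have hfac : (N ! : ℝ) ^ 3 ≠ 0 := by positivity
  apply mul_left_cancel₀ hfac
  linear_combination (3 * N + 1)! * padeIntegral_three_term N a b
    - a ^ (2 * N + 1) * factorial_mul_padeIntegral N b a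
    - (-1) ^ N * b ^ (2 * N + 1) * factorial_mul_padeIntegral N a b
    + (a + b) ^ (2 * N + 1) * factorial_mul_padeIntegral N a (-(a + b))

lemma padeForm_three_term (N : ℕ) (a b : ℤ) :
    a ^ (2 * N + 1) * padeForm N b a + (-1) ^ N * b ^ (2 * N + 1) * padeForm N a b =
      (a + b) ^ (2 * N + 1) * padeForm N a (-(a + b)) := by
  have hreal := padeForm_three_term_real N (Int.castRingHom ℝ a) (Int.castRingHom ℝ b)
  simp only [← map_add, ← map_neg, ← map_padeForm] at hreal
  simp only [eq_intCast] at hreal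
  exact_mod_cast hreal

lemma padeForm_le (N a b : ℕ) : padeForm N a b ≤ 2 ^ (5 * N + 1) * (a + b) ^ N := by
  rw [(Commute.all a b).add_pow', padeForm, mul_sum]
  refine sum_le_sum fun ij hij ↦ ?_
  have hsum : ij.1 + ij.2 = N := mem_antidiagonal.mp hij
  have hcoeff : (N + ij.2).choose ij.2 * (3 * N + 1).choose ij.1 ≤ 2 ^ (5 * N + 1) := calc
    _ ≤ 2 ^ (N + ij.2) * 2 ^ (3 * N + 1) :=
      Nat.mul_le_mul (Nat.choose_le_two_pow _ _) (Nat.choose_le_two_pow _ _)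
    _ ≤ 2 ^ (2 * N) * 2 ^ (3 * N + 1) := by gcongr <;> lia
    _ = 2 ^ (5 * N + 1) := by ring
  have hchoose : 0 < N.choose ij.1 := Nat.choose_pos (by lia)
  rw [smul_eq_mul, Nat.cast_id]
  exact Nat.mul_le_mul hcoeff (Nat.le_mul_of_pos_left _ hchoose)

lemma padeForm_pos {a : ℕ} (ha : 0 < a) (N b : ℕ) : 0 < padeForm N a b :=
  sum_pos' (fun _ _ ↦ Nat.zero_le _)
    ⟨(N, 0), by simp, by simpa using ⟨Nat.choose_pos (by lia), by positivity⟩⟩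

lemma pow_dvd_of_pow_dvd_add {a b t₁ t₂ N : ℕ} (hN : Odd N) (hab : a.Coprime b)
    (hdvd : (a + b) ^ (2 * N + 1) ∣ t₁ * a ^ (2 * N + 1) + t₂ * b ^ (2 * N + 1)) :
    (a + b) ^ (2 * N + 1) ∣ t₁ * padeForm N a b + t₂ * padeForm N b a := by
  have hcop : ((a + b) ^ (2 * N + 1)).Coprime (a ^ (2 * N + 1)) :=
    Nat.Coprime.pow _ _ (by simpa using hab.symm)
  refine hcop.dvd_of_dvd_mul_right ?_
  zify at hdvd ⊢
  obtain ⟨t₃, ht₃⟩ := hdvd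
  have hP (x y : ℕ) : ((padeForm N x y : ℕ) : ℤ) = padeForm N (x : ℤ) (y : ℤ) :=
    map_padeForm (Nat.castRingHom ℤ) N x y
  have hthree := padeForm_three_term N a b
  rw [hN.neg_one_pow] at hthree
  refine ⟨t₃ * padeForm N (a : ℤ) b + t₂ * padeForm N (a : ℤ) (-(a + b)), ?_⟩
  rw [hP, hP]
  linear_combination padeForm N (a : ℤ) b * ht₃ + t₂ * hthree

lemma add_pow_succ_le_of_pow_dvd_add {a b t₁ t₂ N : ℕ} (hN : Odd N) (hab : a.Coprime b)
    (ha : 0 < a) (ht₁ : 0 < t₁)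
    (hdvd : (a + b) ^ (2 * N + 1) ∣ t₁ * a ^ (2 * N + 1) + t₂ * b ^ (2 * N + 1)) :
    (a + b) ^ (N + 1) ≤ 2 ^ (5 * N + 1) * (t₁ + t₂) := by
  have hpos : 0 < t₁ * padeForm N a b + t₂ * padeForm N b a :=
    Nat.add_pos_left (Nat.mul_pos ht₁ (padeForm_pos ha N b)) _
  refine le_of_mul_le_mul_left (a := (a + b) ^ N) ?_ (pow_pos (Nat.add_pos_left ha b) N)
  calc (a + b) ^ N * (a + b) ^ (N + 1) = (a + b) ^ (2 * N + 1) := by ring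
    _ ≤ t₁ * padeForm N a b + t₂ * padeForm N b a :=
      Nat.le_of_dvd hpos (pow_dvd_of_pow_dvd_add hN hab hdvd)
    _ ≤ t₁ * (2 ^ (5 * N + 1) * (a + b) ^ N) + t₂ * (2 ^ (5 * N + 1) * (b + a) ^ N) := by
      gcongr <;> exact padeForm_le _ _ _
    _ = (a + b) ^ N * (2 ^ (5 * N + 1) * (t₁ + t₂)) := by rw [add_comm b a]; ring

lemma dvd_pow_mul_of_factorization_le {m n R E : ℕ} (hm : m ≠ 0) (hn : n ≠ 0) (hR : R ≠ 0)
    (hle : ∀ p, p.Prime → p ∣ m → p ∣ R ∧ m.factorization p ≤ n.factorization p + E) :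
    m ∣ R ^ E * n := by
  rw [← Nat.factorization_prime_le_iff_dvd hm (by positivity)]
  intro p hp
  by_cases hpm : p ∣ m
  · obtain ⟨hpR, hpE⟩ := hle p hp hpm
    have hone : 1 ≤ R.factorization p := (hp.dvd_iff_one_le_factorization hR).mp hpR
    rw [Nat.factorization_mul (by positivity) hn, Nat.factorization_pow, Finsupp.add_apply,
      Finsupp.smul_apply, smul_eq_mul]
    nlinarith
  · simp [Nat.factorization_eq_zero_of_not_dvd hpm]

lemma exists_mul_pow_eq_pow_mul {S : Finset ℕ} {m n R E k : ℕ} (hm : m ∈ Nat.factoredNumbers S)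
    (hn : n ∈ Nat.factoredNumbers S) (hR : R ≠ 0) (hSR : ∀ p ∈ S, p ∣ R)
    (hE : ∀ p ∈ S, |(n.factorization p : ℤ) - k * m.factorization p| ≤ E) :
    ∃ t, 0 < t ∧ t ≤ R ^ (2 * E) ∧ t * m ^ k = R ^ E * n := by
  have hn0 : 0 < n := Nat.pos_of_ne_zero hn.1
  have hmk : 0 < m ^ k := pow_pos (Nat.pos_of_ne_zero hm.1) k
  have hdvd : m ^ k ∣ R ^ E * n := by
    refine dvd_pow_mul_of_factorization_le hmk.ne' hn.1 hR fun p hp hpm ↦ ?_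
    have hpS := Nat.mem_factoredNumbers'.mp hm p hp (hp.dvd_of_dvd_pow hpm)
    have hlower := (abs_le.mp (hE p hpS)).1
    rw [Nat.factorization_pow, Finsupp.smul_apply, smul_eq_mul]
    exact ⟨hSR p hpS, by lia⟩
  have hdvd' : n ∣ R ^ E * m ^ k := by
    refine dvd_pow_mul_of_factorization_le hn.1 hmk.ne' hR fun p hp hpn ↦ ?_
    have hpS := Nat.mem_factoredNumbers'.mp hn p hp hpn
    have hupper := (abs_le.mp (hE p hpS)).2
    rw [Nat.factorization_pow, Finsupp.smul_apply, smul_eq_mul]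
    exact ⟨hSR p hpS, by lia⟩
  obtain ⟨t, ht⟩ := hdvd
  rw [mul_comm (m ^ k)] at ht
  have hRE : 0 < R ^ E := by positivity
  refine ⟨t, Nat.pos_of_mul_pos_right (ht ▸ Nat.mul_pos hRE hn0), ?_, ht.symm⟩
  refine le_of_mul_le_mul_right (a := m ^ k) ?_ hmk
  calc t * m ^ k = R ^ E * n := ht.symm
    _ ≤ R ^ E * (R ^ E * m ^ k) := by
      gcongr
      exact Nat.le_of_dvd (Nat.mul_pos hRE hmk) hdvd'
    _ = R ^ (2 * E) * m ^ k := by ring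

/-- The primitive solutions of the unit equation: triples `(a, b, c)` of positive integers with
`a + b = c` and `a`, `b` coprime, all of whose prime factors lie in `S`. Positivity is part of
`Nat.factoredNumbers`. -/
def primitiveSolutions (S : Finset ℕ) : Set (Fin 3 → ℕ) :=
  {x | x 0 + x 1 = x 2 ∧ (x 0).Coprime (x 1) ∧ ∀ i, x i ∈ Nat.factoredNumbers S}

/-- The logarithmic height of a triple `a + b = c` of natural numbers; base `2` makes it an upper
bound for every prime exponent occurring in the triple. -/
noncomputable def logHeight (x : Fin 3 → ℕ) : ℝ := Real.logb 2 (x 2)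

/-- The vector of the exponents of the primes of `S` in the entries of a triple, normalised by the
height; on primitive solutions it takes values in the unit cube. -/
noncomputable def exponentProfile (S : Finset ℕ) (x : Fin 3 → ℕ) : Fin 3 × S → ℝ :=
  fun ip ↦ (x ip.1).factorization ip.2 / logHeight x

variable {S : Finset ℕ} {x y : Fin 3 → ℕ}

lemma pos_of_mem_primitiveSolutions (hx : x ∈ primitiveSolutions S) (i : Fin 3) : 0 < x i :=
  Nat.pos_of_ne_zero (hx.2.2 i).1

lemma le_of_mem_primitiveSolutions (hx : x ∈ primitiveSolutions S) (i : Fin 3) : x i ≤ x 2 := by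
  have hsum := hx.1
  fin_cases i
  · exact hsum ▸ Nat.le_add_right _ _
  · exact hsum ▸ Nat.le_add_left _ _
  · exact le_rfl

lemma logHeight_pos (hx : x ∈ primitiveSolutions S) : 0 < logHeight x := by
  have h0 := pos_of_mem_primitiveSolutions hx 0
  have h1 := pos_of_mem_primitiveSolutions hx 1
  have hsum := hx.1
  refine Real.logb_pos one_lt_two ?_
  exact_mod_cast (by lia : 1 < x 2)

lemma logb_two_natCast_nonneg (n : ℕ) : 0 ≤ Real.logb 2 n :=
  (Nat.cast_nonneg _).trans (Real.natLog_le_logb n 2)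

lemma factorization_le_logb_two (n p : ℕ) : (n.factorization p : ℝ) ≤ Real.logb 2 n := by
  by_cases hp : p.Prime
  · calc (n.factorization p : ℝ) ≤ Nat.log 2 n := by
          have : Fact p.Prime := ⟨hp⟩
          rw [Nat.factorization_def n hp]
          exact_mod_cast (padicValNat_le_nat_log n).trans (Nat.log_anti_left one_lt_two hp.two_le)
      _ ≤ Real.logb 2 n := Real.natLog_le_logb n 2
  · rw [Nat.factorization_eq_zero_of_not_prime n hp, Nat.cast_zero]
    exact logb_two_natCast_nonneg n

lemma factorization_le_logHeight (hx : x ∈ primitiveSolutions S) (i : Fin 3) (p : ℕ) :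
    (x i).factorization p ≤ logHeight x := by
  refine (factorization_le_logb_two (x i) p).trans
    (Real.logb_le_logb_of_le one_lt_two ?_ ?_)
  · exact_mod_cast pos_of_mem_primitiveSolutions hx i
  · exact_mod_cast le_of_mem_primitiveSolutions hx i

lemma exponentProfile_mem_Icc (hx : x ∈ primitiveSolutions S) : exponentProfile S x ∈ Set.Icc 0 1 :=
  ⟨fun _ ↦ div_nonneg (Nat.cast_nonneg _) (logHeight_pos hx).le,
    fun ip ↦ (div_le_one (logHeight_pos hx)).mpr (factorization_le_logHeight hx ip.1 ip.2)⟩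

lemma pow_succ_le_of_factorization_near (hx : x ∈ primitiveSolutions S)
    (hy : y ∈ primitiveSolutions S) {R N E : ℕ} (hR : R ≠ 0) (hSR : ∀ p ∈ S, p ∣ R) (hN : Odd N)
    (hE : ∀ i, ∀ p ∈ S,
      |((y i).factorization p : ℤ) - (2 * N + 1 : ℕ) * (x i).factorization p| ≤ E) :
    x 2 ^ (N + 1) ≤ 2 ^ (5 * N + 2) * R ^ (2 * E) := by
  choose t ht_pos ht_le ht_eq using fun i ↦
    exists_mul_pow_eq_pow_mul (hx.2.2 i) (hy.2.2 i) hR hSR (hE i)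
  have hdvd : (x 0 + x 1) ^ (2 * N + 1) ∣
      t 0 * x 0 ^ (2 * N + 1) + t 1 * x 1 ^ (2 * N + 1) := by
    rw [ht_eq, ht_eq, ← mul_add, hy.1, hx.1, ← ht_eq]
    exact dvd_mul_left _ _
  calc x 2 ^ (N + 1) = (x 0 + x 1) ^ (N + 1) := by rw [hx.1]
    _ ≤ 2 ^ (5 * N + 1) * (t 0 + t 1) := add_pow_succ_le_of_pow_dvd_add hN hx.2.1
      (pos_of_mem_primitiveSolutions hx 0) (ht_pos 0) hdvd
    _ ≤ 2 ^ (5 * N + 1) * (R ^ (2 * E) + R ^ (2 * E)) := by gcongr <;> apply ht_le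
    _ = 2 ^ (5 * N + 2) * R ^ (2 * E) := by ring

lemma succ_mul_logHeight_le (hx : x ∈ primitiveSolutions S)
    (hy : y ∈ primitiveSolutions S) {R N : ℕ} (hR : R ≠ 0) (hSR : ∀ p ∈ S, p ∣ R) (hN : Odd N)
    {E : ℝ} (hE : ∀ i, ∀ p ∈ S,
      |((y i).factorization p : ℝ) - (2 * N + 1) * (x i).factorization p| ≤ E) (hE0 : 0 ≤ E) :
    (N + 1) * logHeight x ≤ 5 * N + 2 + 2 * E * Real.logb 2 R := by
  have hfloor : ∀ i, ∀ p ∈ S,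
      |((y i).factorization p : ℤ) - (2 * N + 1 : ℕ) * (x i).factorization p| ≤ ⌊E⌋₊ := by
    intro i p hp
    rw [Int.natCast_floor_eq_floor hE0, Int.le_floor]
    simpa using hE i p hp
  have hbound : (x 2 : ℝ) ^ (N + 1) ≤ 2 ^ (5 * N + 2) * (R : ℝ) ^ (2 * ⌊E⌋₊) := by
    exact_mod_cast pow_succ_le_of_factorization_near hx hy hR hSR hN hfloor
  have hx2 : (0 : ℝ) < x 2 := by exact_mod_cast pos_of_mem_primitiveSolutions hx 2
  have hR_pow : (R : ℝ) ^ (2 * ⌊E⌋₊) ≠ 0 := pow_ne_zero _ (Nat.cast_ne_zero.mpr hR)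
  have hlog := Real.logb_le_logb_of_le one_lt_two (pow_pos hx2 _) hbound
  rw [Real.logb_mul (by positivity) hR_pow, Real.logb_pow, Real.logb_pow, Real.logb_pow,
    Real.logb_self_eq_one one_lt_two] at hlog
  calc
    (N + 1) * logHeight x = ((N + 1 : ℕ) : ℝ) * Real.logb 2 (x 2) := by
      rw [logHeight, Nat.cast_add_one]
    _ ≤ 5 * N + 2 + 2 * ⌊E⌋₊ * Real.logb 2 R := by push_cast at hlog ⊢; linarith
    _ ≤ 5 * N + 2 + 2 * E * Real.logb 2 R := by
      gcongr
      · exact logb_two_natCast_nonneg R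
      · exact Nat.floor_le hE0

lemma abs_sub_mul_le_of_abs_div_sub_div_le {v w h h' k ε : ℝ} (hv0 : 0 ≤ v) (hvh : v ≤ h)
    (hh : 0 < h) (hh' : 0 < h') (hclose : |w / h' - v / h| ≤ ε) :
    |w - k * v| ≤ ε * h' + |h' - k * h| := by
  have hsplit : w - k * v = (w / h' - v / h) * h' + v / h * (h' - k * h) := by
    field_simp
    ring
  have hratio : |v / h| ≤ 1 := by
    rw [abs_of_nonneg (by positivity)]
    exact (div_le_one hh).mpr hvh
  calc |w - k * v| ≤ |(w / h' - v / h) * h'| + |v / h * (h' - k * h)| := hsplit ▸ abs_add_le _ _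
    _ = |w / h' - v / h| * h' + |v / h| * |h' - k * h| := by
      rw [abs_mul, abs_mul, abs_of_pos hh']
    _ ≤ ε * h' + 1 * |h' - k * h| := by gcongr
    _ = ε * h' + |h' - k * h| := by rw [one_mul]

lemma abs_factorization_sub_mul_le {ε : ℝ} (hx : x ∈ primitiveSolutions S)
    (hy : y ∈ primitiveSolutions S)
    (hclose : dist (exponentProfile S y) (exponentProfile S x) ≤ ε) (k : ℝ) (i : Fin 3) {p : ℕ}
    (hp : p ∈ S) :
    |((y i).factorization p : ℝ) - k * (x i).factorization p| ≤
      ε * logHeight y + |logHeight y - k * logHeight x| :=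
  abs_sub_mul_le_of_abs_div_sub_div_le (Nat.cast_nonneg _) (factorization_le_logHeight hx i p)
    (logHeight_pos hx) (logHeight_pos hy)
    ((dist_le_pi_dist (exponentProfile S y) (exponentProfile S x) (i, ⟨p, hp⟩)).trans hclose)

lemma logHeight_lt_of_dist_exponentProfile_le {R : ℕ} (hR : R ≠ 0) (hSR : ∀ p ∈ S, p ∣ R)
    {ε : ℝ} (hεR : ε * Real.logb 2 R ≤ 1 / 8) (hx : x ∈ primitiveSolutions S)
    (hy : y ∈ primitiveSolutions S) (hx_large : 20 ≤ logHeight x)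
    (hclose : dist (exponentProfile S y) (exponentProfile S x) ≤ ε) :
    logHeight y < 48 * Real.logb 2 R * logHeight x := by
  set L := Real.logb 2 R
  have hL0 : 0 ≤ L := logb_two_natCast_nonneg R
  have hx_pos := logHeight_pos hx
  have hy_pos := logHeight_pos hy
  have hε : 0 ≤ ε := dist_nonneg.trans hclose
  -- `2 * N + 1` approximates `logHeight y / logHeight x`; as `N` has to be odd, it is `3` mod `4`
  set k := ⌊logHeight y / (4 * logHeight x)⌋₊
  set N := 2 * k + 1 with hN
  have hk_le : k * (4 * logHeight x) ≤ logHeight y :=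
    (le_div_iff₀ (mul_pos four_pos hx_pos)).mp (Nat.floor_le (by positivity))
  have hk_lt : logHeight y < (k + 1) * (4 * logHeight x) :=
    (div_lt_iff₀ (mul_pos four_pos hx_pos)).mp (Nat.lt_floor_add_one _)
  have hNk : (N : ℝ) = 2 * k + 1 := by rw [hN]; push_cast; rfl
  have hratio : |logHeight y - (2 * N + 1) * logHeight x| ≤ 3 * logHeight x := by
    rw [hNk, abs_le]
    constructor <;> linarith
  have hgap : (N + 1) * logHeight x ≤ 5 * N + 2 + 2 * (ε * logHeight y + 3 * logHeight x) * L :=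
    succ_mul_logHeight_le hx hy hR hSR ⟨k, hN⟩ (fun i p hp ↦
      (abs_factorization_sub_mul_le hx hy hclose _ i hp).trans (by gcongr))
      (add_nonneg (mul_nonneg hε hy_pos.le) (by positivity))
  have hεy : 2 * (ε * logHeight y) * L ≤ (k + 1) * logHeight x := calc
    2 * (ε * logHeight y) * L = 2 * logHeight y * (ε * L) := by ring
    _ ≤ 2 * ((k + 1) * (4 * logHeight x)) * (1 / 8) := by gcongr
    _ = (k + 1) * logHeight x := by ring
  have hlarge : (k + 1) * 20 ≤ (k + 1) * logHeight x := by gcongr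
  have hk_bound : (k + 1) * logHeight x < 12 * L * logHeight x := by
    rw [hNk] at hgap
    linarith
  linarith

lemma exists_infinite_subset_dist_lt {α X : Type*} [PseudoMetricSpace X] {s : Set α}
    (hs : s.Infinite) {f : α → X} (hf : TotallyBounded (f '' s)) {ε : ℝ} (hε : 0 < ε) :
    ∃ t ⊆ s, t.Infinite ∧ ∀ a ∈ t, ∀ b ∈ t, dist (f a) (f b) < ε := by
  obtain ⟨c, hc, hcover⟩ := Metric.totallyBounded_iff.mp hf (ε / 2) (half_pos hε)
  have hs_cover : s ⊆ ⋃ z ∈ c, s ∩ f ⁻¹' Metric.ball z (ε / 2) := by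
    intro a ha
    obtain ⟨z, hz, haz⟩ := Set.mem_iUnion₂.mp (hcover (Set.mem_image_of_mem f ha))
    exact Set.mem_biUnion hz ⟨ha, haz⟩
  obtain ⟨z, -, hz⟩ : ∃ z ∈ c, (s ∩ f ⁻¹' Metric.ball z (ε / 2)).Infinite := by
    by_contra! hfin
    exact hs ((hc.biUnion hfin).subset hs_cover)
  refine ⟨_, Set.inter_subset_left, hz, fun a ha b hb ↦ ?_⟩
  calc dist (f a) (f b) ≤ dist (f a) z + dist (f b) z := dist_triangle_right _ _ _
    _ < ε / 2 + ε / 2 := add_lt_add ha.2 hb.2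
    _ = ε := add_halves ε

lemma exists_le_logHeight {t : Set (Fin 3 → ℕ)} (hts : t ⊆ primitiveSolutions S) (ht : t.Infinite)
    (K : ℝ) : ∃ x ∈ t, K ≤ logHeight x := by
  obtain ⟨x, hxt, hx⟩ := ht.exists_notMem_finite (Set.finite_Iic fun _ ↦ ⌈(2 : ℝ) ^ K⌉₊)
  refine ⟨x, hxt, ?_⟩
  obtain ⟨i, hi⟩ : ∃ i, ⌈(2 : ℝ) ^ K⌉₊ < x i := by simpa [Pi.le_def] using hx
  have hx2 : x i ≤ x 2 := le_of_mem_primitiveSolutions (hts hxt) i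
  have hpos : 0 < x 2 := by lia
  rw [logHeight, Real.le_logb_iff_rpow_le one_lt_two (by exact_mod_cast hpos)]
  calc (2 : ℝ) ^ K ≤ ⌈(2 : ℝ) ^ K⌉₊ := Nat.le_ceil _
    _ ≤ x 2 := by exact_mod_cast hi.le.trans hx2

lemma primitiveSolutions_finite (hS : ∀ p ∈ S, p.Prime) : (primitiveSolutions S).Finite := by
  by_contra hinf
  have hR : ∏ p ∈ S, p ≠ 0 := prod_ne_zero_iff.mpr fun p hp ↦ (hS p hp).ne_zero
  set L := Real.logb 2 (∏ p ∈ S, p : ℕ)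
  have hL : 0 ≤ L := logb_two_natCast_nonneg _
  have hbdd : TotallyBounded (exponentProfile S '' primitiveSolutions S) :=
    isCompact_Icc.totallyBounded.subset (Set.image_subset_iff.mpr fun _ ↦ exponentProfile_mem_Icc)
  obtain ⟨t, hts, ht, hclose⟩ :=
    exists_infinite_subset_dist_lt hinf hbdd (ε := 1 / (8 * (L + 1))) (by positivity)
  obtain ⟨x, hxt, hx⟩ := exists_le_logHeight hts ht 20
  obtain ⟨y, hyt, hy⟩ := exists_le_logHeight hts ht (48 * L * logHeight x)
  refine hy.not_gt (logHeight_lt_of_dist_exponentProfile_le hR (fun p hp ↦ dvd_prod_of_mem _ hp) ?_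
    (hts hxt) (hts hyt) hx (hclose y hyt x hxt).le)
  rw [div_mul_eq_mul_div, one_mul, div_le_div_iff₀ (by positivity) (by norm_num)]
  linarith

lemma mem_factoredNumbers_of_padicValRat_eq_zero {q : ℚ} (hq : q ≠ 0)
    (hval : ∀ p : ℕ, p.Prime → p ∉ S → padicValRat p q = 0) :
    q.num.natAbs ∈ Nat.factoredNumbers S ∧ q.den ∈ Nat.factoredNumbers S := by
  have hnum : q.num.natAbs ≠ 0 := by simpa using hq
  have hdvd_iff {p : ℕ} (hp : p.Prime) (hpS : p ∉ S) : p ∣ q.num.natAbs ↔ p ∣ q.den := by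
    have : Fact p.Prime := ⟨hp⟩
    have heq := hval p hp hpS
    rw [padicValRat_def, sub_eq_zero, Nat.cast_inj, padicValInt] at heq
    rw [dvd_iff_padicValNat_ne_zero hnum, dvd_iff_padicValNat_ne_zero q.den_ne_zero, heq]
  have hnot_both {p : ℕ} (hp : p.Prime) : ¬ (p ∣ q.num.natAbs ∧ p ∣ q.den) :=
    fun ⟨hpn, hpd⟩ ↦ Nat.not_coprime_of_dvd_of_dvd hp.one_lt hpn hpd q.reduced
  simp only [Nat.mem_factoredNumbers']
  constructor
  · intro p hp hpn
    by_contra hpS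
    exact hnot_both hp ⟨hpn, (hdvd_iff hp hpS).mp hpn⟩
  · intro p hp hpd
    by_contra hpS
    exact hnot_both hp ⟨(hdvd_iff hp hpS).mpr hpd, hpd⟩

lemma num_add_num_eq_den {u v : ℚ} (huv : u + v = 1) :
    u.den = v.den ∧ u.num + v.num = v.den := by
  have hden : u.den = v.den := by
    rw [eq_sub_of_add_eq huv]
    exact_mod_cast Rat.intCast_sub_den 1 v
  refine ⟨hden, ?_⟩
  have hv : (v.den : ℚ) ≠ 0 := by exact_mod_cast v.den_ne_zero
  rw [← Rat.num_div_den u, ← Rat.num_div_den v, hden, ← add_div, div_eq_one_iff_eq hv] at huv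
  exact_mod_cast huv

lemma exists_primitiveSolution {u v : ℚ} (huv : u + v = 1)
    (hu : u ≠ 0 ∧ ∀ p : ℕ, p.Prime → p ∉ S → padicValRat p u = 0)
    (hv : v ≠ 0 ∧ ∀ p : ℕ, p.Prime → p ∉ S → padicValRat p v = 0) :
    ∃ x ∈ primitiveSolutions S, ∃ i j, |u| = x i / x j := by
  obtain ⟨hu_num, hu_den⟩ := mem_factoredNumbers_of_padicValRat_eq_zero hu.1 hu.2
  obtain ⟨hv_num, -⟩ := mem_factoredNumbers_of_padicValRat_eq_zero hv.1 hv.2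
  obtain ⟨hden, hsum⟩ := num_add_num_eq_den huv
  have hu_cop : u.num.natAbs.Coprime u.den := u.reduced
  have hv_cop : v.num.natAbs.Coprime u.den := hden ▸ v.reduced
  have habs : |u| = (u.num.natAbs : ℚ) / u.den := by
    rw [Rat.abs_def, Rat.divInt_eq_div, Int.cast_natCast, Int.cast_natCast]
  rcases lt_or_gt_of_ne (Rat.num_ne_zero.mpr hu.1) with hu_neg | hu_pos
  · have hsum_nat : u.num.natAbs + u.den = v.num.natAbs := by lia
    exact ⟨![u.num.natAbs, u.den, v.num.natAbs],
      ⟨hsum_nat, hu_cop, by simp [Fin.forall_fin_succ, hu_num, hu_den, hv_num]⟩, 0, 1, habs⟩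
  rcases lt_or_gt_of_ne (Rat.num_ne_zero.mpr hv.1) with hv_neg | hv_pos
  · have hsum_nat : v.num.natAbs + u.den = u.num.natAbs := by lia
    exact ⟨![v.num.natAbs, u.den, u.num.natAbs],
      ⟨hsum_nat, hv_cop, by simp [Fin.forall_fin_succ, hu_num, hu_den, hv_num]⟩, 2, 1, habs⟩
  · have huv_nat : u.den = u.num.natAbs + v.num.natAbs := by lia
    have huv_cop : u.num.natAbs.Coprime v.num.natAbs := by
      simpa [huv_nat] using hu_cop
    exact ⟨![u.num.natAbs, v.num.natAbs, u.den],
      ⟨huv_nat.symm, huv_cop, by simp [Fin.forall_fin_succ, hu_num, hu_den, hv_num]⟩, 0, 2, habs⟩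

lemma finite_setOf_abs_eq_div {s : Set (Fin 3 → ℕ)} (hs : s.Finite) :
    {u : ℚ | ∃ x ∈ s, ∃ i j, |u| = x i / x j}.Finite := by
  have hpairs : (s ×ˢ (Set.univ : Set (Fin 3 × Fin 3))).Finite := hs.prod Set.finite_univ
  refine ((hpairs.image fun w ↦ (w.1 w.2.1 / w.1 w.2.2 : ℚ)).preimage' (f := abs) ?_).subset ?_
  · intro b _
    refine (Set.toFinite {b, -b}).subset fun u hu ↦ ?_
    exact eq_or_eq_neg_of_abs_eq hu
  · rintro u ⟨x, hx, i, j, hu⟩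
    exact ⟨(x, i, j), ⟨hx, trivial⟩, hu.symm⟩

end UnitEquation

/-- Siegel's theorem on the unit equation (reproved in the paper following Kim): for a
finite set `S` of primes, the set of pairs `(u, v)` of `S`-units of `ℚ` with
`u + v = 1` is finite.  Here a nonzero rational `u` is an `S`-unit when its `p`-adic
valuation vanishes for every prime `p ∉ S`. -/
theorem unit_equation_finite (S : Finset ℕ) (hS : ∀ p ∈ S, p.Prime) :
    {uv : ℚ × ℚ |
      (uv.1 ≠ 0 ∧ ∀ p : ℕ, p.Prime → p ∉ S → padicValRat p uv.1 = 0) ∧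
      (uv.2 ≠ 0 ∧ ∀ p : ℕ, p.Prime → p ∉ S → padicValRat p uv.2 = 0) ∧
      uv.1 + uv.2 = 1}.Finite := by
  refine ((finite_setOf_abs_eq_div (primitiveSolutions_finite hS)).image
    fun u ↦ (u, 1 - u)).subset ?_
  rintro ⟨u, v⟩ ⟨hu, hv, huv⟩
  exact ⟨u, exists_primitiveSolution huv hu hv, Prod.ext rfl (sub_eq_of_eq_add' huv.symm)⟩
end
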